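/- arXiv:2509.13973 — 2 statements merged into one kernel-verified Lean document; each statement's English description precedes it below -/
import Mathlib

section
/- Let f : Q ⟶ R be a morphism in the category Quiv of quivers (a prefunctor). Then f is an epimorphism in Quiv if and only if its object map f.obj is surjective and the induced map on total arrow types, sending ⟨a, b, x⟩ to ⟨f.obj a, f.obj b, f.map x⟩, is surjective. -/
/-!
Taking vertices and arrows is a faithful functor from quivers to pairs of types, and faithful
functors reflect epimorphisms. It is also left adjoint to the cofree quiver, whose prefunctors from
`Q` are pairs of functions on the vertices and on the arrows of `Q`. Testing `f` against the cofree
quiver on two nontrivial types therefore detects surjectivity on vertices and on arrows at once.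
-/

open CategoryTheory

/-- The map induced by a prefunctor on total arrow types. -/
def totalMap {Q R : Type*} [Quiver Q] [Quiver R] (f : Q ⥤q R) :
    (Σ (a : Q) (b : Q), a ⟶ b) → (Σ (a : R) (b : R), a ⟶ b) :=
  fun p => ⟨f.obj p.1, f.obj p.2.1, f.map p.2.2⟩

open Function

/-- The cofree quiver on a type `V` of vertices and a type `A` of arrows: every ordered pair of
vertices is joined by a copy of `A`. -/
structure CofreeQuiver (V A : Type*) where
  vertex : V

namespace CofreeQuiver

variable {V A : Type*}

instance : Quiver (CofreeQuiver V A) where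
  Hom _ _ := A

/-- The universal property of the cofree quiver: it is right adjoint to taking vertices and
arrows. Stated as an equivalence so that all universes stay independent. -/
def prefunctorEquiv {Q : Type*} [Quiver Q] :
    (Q ⥤q CofreeQuiver V A) ≃ (Q → V) × ((Σ (a : Q) (b : Q), a ⟶ b) → A) where
  toFun g := (fun a => (g.obj a).vertex, fun p => g.map p.2.2)
  invFun φ := { obj a := ⟨φ.1 a⟩, map x := φ.2 ⟨_, _, x⟩ }

theorem prefunctorEquiv_comp {Q R : Type*} [Quiver Q] [Quiver R] (f : Q ⥤q R)
    (g : R ⥤q CofreeQuiver V A) :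
    prefunctorEquiv (f ⋙q g) = Prod.map (· ∘ f.obj) (· ∘ totalMap f) (prefunctorEquiv g) :=
  rfl

end CofreeQuiver

section Prefunctor

variable {Q R S : Type*} [Quiver Q] [Quiver R] [Quiver S]

theorem totalMap_comp (f : Q ⥤q R) (g : R ⥤q S) : totalMap (f ⋙q g) = totalMap g ∘ totalMap f :=
  rfl

theorem prefunctor_ext_of_obj_of_totalMap {f g : Q ⥤q R} (hobj : f.obj = g.obj)
    (htotal : totalMap f = totalMap g) : f = g := by
  obtain ⟨fobj, fmap⟩ := f
  obtain ⟨gobj, gmap⟩ := g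
  obtain rfl : fobj = gobj := hobj
  congr
  funext a b x
  simpa [totalMap] using congrFun htotal ⟨a, b, x⟩

theorem prefunctor_comp_left_injective {f : Q ⥤q R} (hobj : Surjective f.obj)
    (htotal : Surjective (totalMap f)) : Injective fun g : R ⥤q S => f ⋙q g := by
  intro g h hgh
  refine prefunctor_ext_of_obj_of_totalMap (hobj.injective_comp_right ?_)
    (htotal.injective_comp_right ?_)
  · exact congrArg Prefunctor.obj hgh
  · simpa only [totalMap_comp] using congrArg totalMap hgh

theorem surjective_obj_and_totalMap_of_comp_cofreeQuiver_injective {V A : Type*} [Nontrivial V]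
    [Nontrivial A] {f : Q ⥤q R} (hf : Injective fun g : R ⥤q CofreeQuiver V A => f ⋙q g) :
    Surjective f.obj ∧ Surjective (totalMap f) := by
  have hprod : Injective (Prod.map (· ∘ f.obj) (· ∘ totalMap f) :
      (R → V) × ((Σ (a : R) (b : R), a ⟶ b) → A) → _) := by
    rw [← CofreeQuiver.prefunctorEquiv.injective_comp]
    exact CofreeQuiver.prefunctorEquiv.injective.comp hf
  obtain ⟨hobj, htotal⟩ := Prod.map_injective.1 hprod
  exact ⟨injective_comp_right_iff_surjective.1 hobj, injective_comp_right_iff_surjective.1 htotal⟩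

end Prefunctor

/-- A morphism in `Quiv` is an epimorphism iff its object map is surjective and its
induced map on total arrow types is surjective. -/
theorem quiv_epi_iff {Q R : Quiv} (f : Q ⟶ R) :
    Epi f ↔ Function.Surjective f.obj ∧ Function.Surjective (totalMap f) := by
  constructor
  · intro hf
    have hcomp : Injective fun g : R ⟶ Quiv.of (CofreeQuiver (ULift Bool) (ULift Bool)) => f ≫ g :=
      fun _ _ => (cancel_epi f).1
    exact surjective_obj_and_totalMap_of_comp_cofreeQuiver_injective hcomp
  · rintro ⟨hobj, htotal⟩
    exact ⟨fun _ _ h => prefunctor_comp_left_injective hobj htotal h⟩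
end

section
/- Let f : Λ → Μ be a surjective map and e_G a setoid on Λ whose pushforward along f is the top setoid on Μ. Let Ν be a type, e_R a setoid on Ν, and r : Ν → Μ a map such that r x = r y implies e_R relates x and y, for all x, y : Ν. Let ξ : Λ → Ν be a map with r ∘ ξ = f such that e_G a b implies e_R (ξ a) (ξ b). Then for all a, b : Λ, e_R relates ξ a and ξ b. -/
/-- The pushforward of a setoid `e` on `Λ` along a map `f : Λ → Μ`: the equivalence
relation on `Μ` generated by relating `f a` and `f b` whenever `e` relates `a` and `b`. -/
def Setoid.pushforward {Λ Μ : Type*} (f : Λ → Μ) (e : Setoid Λ) : Setoid Μ :=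
  Relation.EqvGen.setoid (fun x y => ∃ a b : Λ, e.r a b ∧ f a = x ∧ f b = y)

section

variable {α β : Type*}

theorem setoid_map_mono (f : α → β) {e s : Setoid α} (h : e ≤ s) : e.map f ≤ s.map f :=
  Setoid.eqvGen_mono fun _ _ ⟨a, b, hab, ha, hb⟩ => ⟨a, b, h hab, ha, hb⟩

theorem setoid_ker_le_comap (f : α → β) (s : Setoid β) : Setoid.ker f ≤ s.comap f :=
  fun a b h => by rw [Setoid.comap_rel, Setoid.ker_def.1 h]

theorem setoid_comap_map_eq_sup_ker (f : α → β) (e : Setoid α) :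
    (e.map f).comap f = e ⊔ Setoid.ker f := by
  apply le_antisymm
  · -- `e ⊔ ker f` is saturated for `f`, so pushing it forward and pulling it back adds nothing.
    calc (e.map f).comap f
        ≤ ((e ⊔ Setoid.ker f).map f).comap f := fun _ _ h => setoid_map_mono f le_sup_left h
      _ = e ⊔ Setoid.ker f := Setoid.comap_map_of_ker_le f _ le_sup_right
  · exact sup_le Setoid.le_comap_map (setoid_ker_le_comap f _)

theorem pushforward_eq_map (f : α → β) (e : Setoid α) : Setoid.pushforward f e = e.map f :=
  rfl

end

theorem images_related_of_pushforward_top_general {Λ Μ Ν : Type*} (f : Λ → Μ) (eG : Setoid Λ)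
    (eR : Setoid Ν) (ξ : Λ → Ν)
    (hfiber : ∀ a b : Λ, f a = f b → eR.r (ξ a) (ξ b))
    (hξ : ∀ a b : Λ, eG.r a b → eR.r (ξ a) (ξ b))
    {a b : Λ} (hab : (Setoid.pushforward f eG).r (f a) (f b)) :
    eR.r (ξ a) (ξ b) := by
  have hle : (Setoid.pushforward f eG).comap f ≤ eR.comap ξ := by
    rw [pushforward_eq_map, setoid_comap_map_eq_sup_ker]
    exact sup_le (fun x y => hξ x y) (fun x y => hfiber x y)
  exact hle hab

/-- If the pushforward of `e_G` along the surjection `f` is the top setoid, `r ∘ ξ = f`,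
`r x = r y` implies `e_R x y`, and `ξ` maps `e_G`-related elements to `e_R`-related ones,
then the images under `ξ` of any two elements are `e_R`-related. -/
theorem images_related_of_pushforward_top {Λ Μ Ν : Type*} (f : Λ → Μ)
    (hf : Function.Surjective f) (eG : Setoid Λ)
    (hpush : Setoid.pushforward f eG = ⊤)
    (eR : Setoid Ν) (r : Ν → Μ)
    (hr : ∀ x y : Ν, r x = r y → eR.r x y)
    (ξ : Λ → Ν) (hcomm : r ∘ ξ = f)
    (hξ : ∀ a b : Λ, eG.r a b → eR.r (ξ a) (ξ b)) :
    ∀ a b : Λ, eR.r (ξ a) (ξ b) := by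
  subst hcomm
  exact fun a b => images_related_of_pushforward_top_general (r ∘ ξ) eG eR ξ
    (fun x y => hr (ξ x) (ξ y)) hξ (hpush ▸ trivial)
end
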